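/- Let L be a finite-dimensional Lie algebra over a field K of characteristic zero, V a finite-dimensional L-module, and I an ideal of L of codimension 1. Then for any natural number n ≥ 1 and any x ∈ L with x ∉ I, there is an isomorphism of vector spaces H^n(L,V) ≅ H^n(I,V)^x ⊕ H^{n−1}(I,V)^x. -/

import Mathlib

namespace CE

variable (K : Type*) [Field K]
variable (L : Type*) [LieRing L] [LieAlgebra K L]
variable (V : Type*) [AddCommGroup V] [Module K V] [LieRingModule L V] [LieModule K L V]

/-- The submodule of `(Fin n → L) → V` consisting of alternating multilinear `n`-cochains. -/
def Cc (n : ℕ) : Submodule K ((Fin n → L) → V) where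
  carrier := {f |
    (∀ (y : Fin n → L) (i : Fin n) (a b : L),
      f (Function.update y i (a + b)) = f (Function.update y i a) + f (Function.update y i b)) ∧
    (∀ (y : Fin n → L) (i : Fin n) (c : K) (a : L),
      f (Function.update y i (c • a)) = c • f (Function.update y i a)) ∧
    (∀ (y : Fin n → L) (i j : Fin n), i ≠ j → y i = y j → f y = 0)}
  add_mem' := by
    rintro f g ⟨hf1, hf2, hf3⟩ ⟨hg1, hg2, hg3⟩
    refine ⟨fun y i a b => ?_, fun y i c a => ?_, fun y i j hij hy => ?_⟩
    · simp only [Pi.add_apply, hf1 y i a b, hg1 y i a b, add_add_add_comm]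
    · simp only [Pi.add_apply, hf2 y i c a, hg2 y i c a, smul_add]
    · simp only [Pi.add_apply, hf3 y i j hij hy, hg3 y i j hij hy, add_zero]
  zero_mem' := by
    refine ⟨fun y i a b => ?_, fun y i c a => ?_, fun y i j hij hy => ?_⟩ <;> simp
  smul_mem' := by
    rintro c f ⟨hf1, hf2, hf3⟩
    refine ⟨fun y i a b => ?_, fun y i d a => ?_, fun y i j hij hy => ?_⟩
    · simp only [Pi.smul_apply, hf1 y i a b, smul_add]
    · simp only [Pi.smul_apply, hf2 y i d a]
      rw [smul_comm]
    · simp only [Pi.smul_apply, hf3 y i j hij hy, smul_zero]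

/-- The raw Chevalley–Eilenberg differential, as a function. -/
def dAux : ∀ (n : ℕ), ((Fin n → L) → V) → (Fin (n + 1) → L) → V
  | 0, f, x => ⁅x 0, f Fin.elim0⁆
  | (m + 1), f, x =>
      (∑ i : Fin (m + 2), ((-1 : ℤ) ^ (i : ℕ)) • ⁅x i, f (x ∘ i.succAbove)⁆) +
      ∑ i : Fin (m + 2), ∑ j : Fin (m + 2),
        if h : (i : ℕ) < (j : ℕ) then
          ((-1 : ℤ) ^ ((i : ℕ) + (j : ℕ))) •
            f (Fin.cons ⁅x i, x j⁆ fun k =>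
                x (j.succAbove ((Fin.castLT i
                  (lt_of_lt_of_le h (Nat.lt_succ_iff.mp j.isLt))).succAbove k)))
        else 0

/-- The Chevalley–Eilenberg differential, as a linear map on all raw cochains. -/
def dRaw (n : ℕ) : ((Fin n → L) → V) →ₗ[K] ((Fin (n + 1) → L) → V) where
  toFun := dAux L V n
  map_add' f g := by
    have hsplit : ∀ (P : Prop) [Decidable P] (a b : P → V),
        (if h : P then a h + b h else 0) =
          (if h : P then a h else 0) + (if h : P then b h else 0) := by
      intro P _ a b; split <;> simp
    funext x
    cases n with
    | zero => simp [dAux]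
    | succ m =>
      simp only [dAux, Pi.add_apply, lie_add, smul_add, hsplit, Finset.sum_add_distrib]
      abel
  map_smul' c f := by
    funext x
    cases n with
    | zero => simp [dAux]
    | succ m =>
      simp only [dAux, Pi.smul_apply, lie_smul, RingHom.id_apply, smul_add, Finset.smul_sum]
      congr 1
      · exact Finset.sum_congr rfl fun i _ => smul_comm _ _ _
      · refine Finset.sum_congr rfl fun i _ => Finset.sum_congr rfl fun j _ => ?_
        split
        · exact smul_comm _ _ _
        · simp

/-- Cocycles. -/
def Zc (n : ℕ) : Submodule K ((Fin n → L) → V) :=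
  Cc K L V n ⊓ LinearMap.ker (dRaw K L V n)

/-- Coboundaries. -/
def Bc : ∀ n : ℕ, Submodule K ((Fin n → L) → V)
  | 0 => ⊥
  | (m + 1) => Submodule.map (dRaw K L V m) (Cc K L V m)

/-- The `n`-th Chevalley–Eilenberg cohomology. -/
abbrev Hq (n : ℕ) :=
  ↥(Zc K L V n) ⧸ Submodule.comap (Zc K L V n).subtype (Bc K L V n)

end CE

namespace CE

variable (K : Type*) [Field K]
variable (L : Type*) [LieRing L] [LieAlgebra K L]
variable (V : Type*) [AddCommGroup V] [Module K V] [LieRingModule L V] [LieModule K L V]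
variable (I : LieSubalgebra K L)

/-- The action of an element `x ∈ L` on the `n`-cochains of an ideal `I ≤ L` with
coefficients in `V`: `(x·f)(y₁,…,yₙ) = x·f(y₁,…,yₙ) − Σᵢ f(y₁,…,⁅x,yᵢ⁆,…,yₙ)`. -/
def actRaw (hI : ∀ a b : L, b ∈ I → ⁅a, b⁆ ∈ I) (x : L) (n : ℕ) :
    ((Fin n → ↥I) → V) →ₗ[K] ((Fin n → ↥I) → V) where
  toFun f := fun y =>
    ⁅x, f y⁆ - ∑ i : Fin n, f (Function.update y i ⟨⁅x, (y i : L)⁆, hI x (y i) (y i).2⟩)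
  map_add' f g := by
    funext y
    simp only [Pi.add_apply, lie_add, Finset.sum_add_distrib]
    abel
  map_smul' c f := by
    funext y
    simp only [Pi.smul_apply, lie_smul, RingHom.id_apply, Finset.smul_sum, smul_sub]

/-- The cocycles whose cohomology class is annihilated by the induced action of `x`:
cocycles `f` such that `x·f` is a coboundary. -/
def ZxInv (hI : ∀ a b : L, b ∈ I → ⁅a, b⁆ ∈ I) (x : L) (n : ℕ) :
    Submodule K ((Fin n → ↥I) → V) :=
  Zc K ↥I V n ⊓ (Bc K ↥I V n).comap (actRaw K L V I hI x n)

/-- `Hⁿ(I,V)ˣ`: the subspace of `Hⁿ(I,V)` consisting of the classes annihilated by the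
induced action of `x`, i.e. the image in `Hⁿ(I,V)` of the cocycles `f` with `x·f` a
coboundary. -/
def HInv (hI : ∀ a b : L, b ∈ I → ⁅a, b⁆ ∈ I) (x : L) (n : ℕ) :
    Submodule K (Hq K ↥I V n) :=
  ((ZxInv K L V I hI x n).comap (Zc K ↥I V n).subtype).map
    (Submodule.mkQ (Submodule.comap (Zc K ↥I V n).subtype (Bc K ↥I V n)))

end CE

/-!
Write `ι_y`, `θ_y` and `δ` for the contraction, the Lie derivative and the differential on
cochains. Cartan's formula `ι_y δ + δ ι_y = θ_y` determines `δ` recursively, and every identity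
needed between these operators follows from it by induction on the degree, comparing contractions.

Since `L = I ⊕ K x`, a cochain `f` of `L` is the same as the pair `(f|_I, (ι_x f)|_I)` of cochains
of `I`, and by Cartan's formula this identifies the complex of `L` with the shifted mapping cone
of `θ_x` on the complex of `I`. Its long exact sequence `Hⁿ⁻¹(I) → Hⁿ⁻¹(I) → Hⁿ(L) → Hⁿ(I) →
Hⁿ(I)`, whose outer maps are the action of `x`, presents `Hⁿ(L)` as an extension of `Hⁿ(I)ˣ` by
the cokernel of `x` on `Hⁿ⁻¹(I)`. In finite dimension the cokernel of an endomorphism has the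
dimension of its kernel, here `Hⁿ⁻¹(I)ˣ`.
-/

namespace CE

section Contraction

variable (K : Type*) [Field K] {L V : Type*} [AddCommGroup V] [Module K V] {n : ℕ}

/-- The contraction (interior product) `ι_y`, plugging `y` into the first slot of a cochain. -/
def contract (y : L) : ((Fin (n + 1) → L) → V) →ₗ[K] ((Fin n → L) → V) :=
  LinearMap.funLeft K V fun z => Fin.cons y z

theorem contract_apply (y : L) (f : (Fin (n + 1) → L) → V) (z : Fin n → L) :
    contract K y f z = f (Fin.cons y z) := rfl

theorem eq_of_contract_eq {f g : (Fin (n + 1) → L) → V}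
    (h : ∀ y, contract K y f = contract K y g) : f = g := by
  funext z
  simpa only [contract_apply, Fin.cons_self_tail] using congrFun (h (z 0)) (Fin.tail z)

end Contraction

section Cochains

variable {K : Type*} [Field K]
variable {L : Type*} [LieRing L] [LieAlgebra K L]
variable {V : Type*} [AddCommGroup V] [Module K V]
variable {n : ℕ}

local notation "ι" => contract K

theorem mem_Cc_iff_exists_alternatingMap {f : (Fin n → L) → V} :
    f ∈ Cc K L V n ↔ ∃ g : L [⋀^Fin n]→ₗ[K] V, ⇑g = f := by
  refine ⟨fun hf => ?_, ?_⟩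
  · exact ⟨⟨⟨f, fun y i a b => by convert hf.1 y i a b, fun y i c a => by convert hf.2.1 y i c a⟩,
      fun y i j h hij => hf.2.2 y i j hij h⟩, rfl⟩
  · rintro ⟨g, rfl⟩
    exact ⟨fun y i a b => g.map_update_add y i a b, fun y i c a => g.map_update_smul y i c a,
      fun y _ _ hij h => g.map_eq_zero_of_eq y h hij⟩

theorem mem_Cc_zero (f : (Fin 0 → L) → V) : f ∈ Cc K L V 0 :=
  ⟨fun _ i => i.elim0, fun _ i => i.elim0, fun _ i => i.elim0⟩

instance finite_Cc [FiniteDimensional K L] [FiniteDimensional K V] :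
    FiniteDimensional K (Cc K L V n) := by
  let toFunction : MultilinearMap K (fun _ : Fin n => L) V →ₗ[K] ((Fin n → L) → V) :=
    { toFun := fun g => g, map_add' := fun _ _ => rfl, map_smul' := fun _ _ => rfl }
  refine Submodule.finiteDimensional_of_le (S₂ := LinearMap.range toFunction) fun f hf => ?_
  obtain ⟨g, rfl⟩ := mem_Cc_iff_exists_alternatingMap.1 hf
  exact ⟨g.toMultilinearMap, rfl⟩

theorem contract_mem_Cc (y : L) {f : (Fin (n + 1) → L) → V} (hf : f ∈ Cc K L V (n + 1)) :
    ι y f ∈ Cc K L V n := by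
  obtain ⟨g, rfl⟩ := mem_Cc_iff_exists_alternatingMap.1 hf
  exact mem_Cc_iff_exists_alternatingMap.2 ⟨g.curryLeft y, rfl⟩

theorem isLinearMap_contract {f : (Fin (n + 1) → L) → V} (hf : f ∈ Cc K L V (n + 1)) :
    IsLinearMap K fun y => ι y f := by
  obtain ⟨g, rfl⟩ := mem_Cc_iff_exists_alternatingMap.1 hf
  refine ⟨fun a b => ?_, fun c a => ?_⟩
  · exact congrArg DFunLike.coe (g.curryLeft.map_add a b)
  · exact congrArg DFunLike.coe (g.curryLeft.map_smul c a)

theorem contract_contract_self (y : L) {f : (Fin (n + 2) → L) → V} (hf : f ∈ Cc K L V (n + 2)) :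
    ι y (ι y f) = 0 :=
  funext fun _ => hf.2.2 _ 0 1 zero_ne_one rfl

theorem contract_contract_swap (a b : L) {f : (Fin (n + 2) → L) → V}
    (hf : f ∈ Cc K L V (n + 2)) : ι a (ι b f) = -ι b (ι a f) := by
  have h := contract_contract_self (a + b) hf
  rw [(isLinearMap_contract hf).map_add, map_add,
    (isLinearMap_contract (contract_mem_Cc a hf)).map_add,
    (isLinearMap_contract (contract_mem_Cc b hf)).map_add, contract_contract_self a hf,
    contract_contract_self b hf, zero_add, add_zero] at h
  exact eq_neg_of_add_eq_zero_right h

theorem mem_Cc_succ_of_contract {f : (Fin (n + 1) → L) → V}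
    (hmem : ∀ y, ι y f ∈ Cc K L V n) (hlin : IsLinearMap K fun y => ι y f)
    (hzero : ∀ (y : L) (z : Fin n → L) (j : Fin n), z j = y → ι y f z = 0) :
    f ∈ Cc K L V (n + 1) := by
  refine ⟨fun z i a b => ?_, fun z i c a => ?_, fun z i j hij h => ?_⟩
  · cases z using Fin.consCases with | _ y z
    cases i using Fin.cases with
    | zero => simpa only [Fin.update_cons_zero] using! congrFun (hlin.map_add a b) z
    | succ i => simpa only [← Fin.cons_update] using! (hmem y).1 z i a b
  · cases z using Fin.consCases with | _ y z
    cases i using Fin.cases with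
    | zero => simpa only [Fin.update_cons_zero] using! congrFun (hlin.map_smul c a) z
    | succ i => simpa only [← Fin.cons_update] using! (hmem y).2.1 z i c a
  · cases z using Fin.consCases with | _ y z
    cases i using Fin.cases with
    | zero =>
      cases j using Fin.cases with
      | zero => exact absurd rfl hij
      | succ j => exact hzero y z j h.symm
    | succ i =>
      cases j using Fin.cases with
      | zero => exact hzero y z i h
      | succ j => exact (hmem y).2.2 z i j (fun hij' => hij (congrArg Fin.succ hij')) h

theorem mem_Cc_one_of_contract {f : (Fin 1 → L) → V} (hlin : IsLinearMap K fun y => ι y f) :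
    f ∈ Cc K L V 1 :=
  mem_Cc_succ_of_contract (fun _ => mem_Cc_zero _) hlin fun _ _ j => j.elim0

theorem mem_Cc_add_two_of_contract {f : (Fin (n + 2) → L) → V}
    (hmem : ∀ y, ι y f ∈ Cc K L V (n + 1)) (hlin : IsLinearMap K fun y => ι y f)
    (hself : ∀ y, ι y (ι y f) = 0) : f ∈ Cc K L V (n + 2) := by
  refine mem_Cc_succ_of_contract hmem hlin fun y z j hj => ?_
  obtain ⟨g, hg⟩ := mem_Cc_iff_exists_alternatingMap.1 (hmem y)
  have hfirst (w : Fin (n + 1) → L) (hw : w 0 = y) : g w = 0 := by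
    rw [hg, ← Fin.cons_self_tail w, hw]
    exact congrFun (hself y) (Fin.tail w)
  rw [← hg]
  obtain rfl | hj0 := eq_or_ne j 0
  · exact hfirst z hj
  · rw [← neg_eq_zero, ← g.map_swap z hj0]
    exact hfirst _ (by simpa using hj)

theorem neg_one_pow_smul_cons_eq_update {f : (Fin (n + 1) → L) → V}
    (hf : f ∈ Cc K L V (n + 1)) (z : Fin (n + 1) → L) (i : Fin (n + 1)) (a : L) :
    (-1 : ℤ) ^ (i : ℕ) • f (Fin.cons a (z ∘ i.succAbove)) = f (Function.update z i a) := by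
  obtain ⟨g, rfl⟩ := mem_Cc_iff_exists_alternatingMap.1 hf
  rw [← Fin.insertNth_removeNth]
  exact (g.map_insertNth i a (z ∘ i.succAbove)).symm

end Cochains

section LieDerivative

variable (K : Type*) [Field K]
variable {L : Type*} [LieRing L] [LieAlgebra K L]
variable {V : Type*} [AddCommGroup V] [Module K V] [LieRingModule L V] [LieModule K L V]
variable {n : ℕ}

/-- The Lie derivative `θ_x`: the action of `x ∈ L` on the cochains of `L` itself, given by the
same formula as `actRaw`. -/
def lieDeriv (x : L) : ((Fin n → L) → V) →ₗ[K] ((Fin n → L) → V) where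
  toFun f y := ⁅x, f y⁆ - ∑ i, f (Function.update y i ⁅x, y i⁆)
  map_add' f g := by
    funext y
    simp only [Pi.add_apply, lie_add, Finset.sum_add_distrib]
    abel
  map_smul' c f := by
    funext y
    simp only [Pi.smul_apply, lie_smul, RingHom.id_apply, Finset.smul_sum, smul_sub]

theorem lieDeriv_apply (x : L) (f : (Fin n → L) → V) (y : Fin n → L) :
    lieDeriv K x f y = ⁅x, f y⁆ - ∑ i, f (Function.update y i ⁅x, y i⁆) := rfl

theorem contract_lieDeriv (x y : L) (f : (Fin (n + 1) → L) → V) :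
    contract K y (lieDeriv K x f) = lieDeriv K x (contract K y f) - contract K ⁅x, y⁆ f := by
  funext z
  simp only [contract_apply, lieDeriv_apply, Fin.sum_univ_succ, Pi.sub_apply,
    Fin.update_cons_zero, Fin.cons_zero, Fin.cons_succ, ← Fin.cons_update]
  abel

variable {K}

local notation "ι" => contract K
local notation "θ" => lieDeriv K

theorem isLinearMap_lieDeriv {f : (Fin n → L) → V} (hf : f ∈ Cc K L V n) :
    IsLinearMap K fun x => θ x f := by
  refine ⟨fun a b => funext fun z => ?_, fun c a => funext fun z => ?_⟩
  · simp only [lieDeriv_apply, Pi.add_apply, add_lie, hf.1, Finset.sum_add_distrib]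
    abel
  · simp only [lieDeriv_apply, Pi.smul_apply, smul_lie, hf.2.1, Finset.smul_sum, smul_sub]

theorem isLinearMap_contract_lieDeriv (x : L) {f : (Fin (n + 1) → L) → V}
    (hf : f ∈ Cc K L V (n + 1)) : IsLinearMap K fun y => ι y (θ x f) := by
  have hlin := isLinearMap_contract hf
  refine ⟨fun a b => ?_, fun c a => ?_⟩
  · simp only [contract_lieDeriv, lie_add, hlin.map_add, map_add]
    abel
  · simp only [contract_lieDeriv, lie_smul, hlin.map_smul, map_smul, smul_sub]

theorem lieDeriv_mem_Cc (x : L) {f : (Fin n → L) → V} (hf : f ∈ Cc K L V n) :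
    θ x f ∈ Cc K L V n := by
  induction n with
  | zero => exact mem_Cc_zero _
  | succ n ih =>
    cases n with
    | zero => exact mem_Cc_one_of_contract (isLinearMap_contract_lieDeriv x hf)
    | succ n =>
      refine mem_Cc_add_two_of_contract (fun y => ?_) (isLinearMap_contract_lieDeriv x hf)
        fun y => ?_
      · rw [contract_lieDeriv]
        exact Submodule.sub_mem _ (ih (contract_mem_Cc y hf)) (contract_mem_Cc _ hf)
      · rw [contract_lieDeriv, map_sub, contract_lieDeriv, contract_contract_self y hf, map_zero,
          contract_contract_swap y ⁅x, y⁆ hf]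
        abel

theorem lieDeriv_lieDeriv (x y : L) {f : (Fin n → L) → V} (hf : f ∈ Cc K L V n) :
    θ x (θ y f) = θ y (θ x f) + θ ⁅x, y⁆ f := by
  induction n with
  | zero =>
    funext z
    simp [lieDeriv_apply]
  | succ n ih =>
    refine eq_of_contract_eq K fun w => ?_
    simp only [map_add, contract_lieDeriv, map_sub, ih (contract_mem_Cc w hf), lie_lie,
      (isLinearMap_contract hf).map_sub]
    abel

end LieDerivative

section Differential

theorem sum_sum_lt_succ {M : Type*} [AddCommMonoid M] {n : ℕ}
    (F : ∀ i j : Fin (n + 1), (i : ℕ) < j → M) :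
    (∑ i : Fin (n + 1), ∑ j : Fin (n + 1), if h : (i : ℕ) < j then F i j h else 0) =
      ∑ j : Fin n, F 0 j.succ j.succ_pos +
        ∑ i : Fin n, ∑ j : Fin n,
          if h : (i : ℕ) < j then F i.succ j.succ (Nat.succ_lt_succ h) else 0 := by
  simp [Fin.sum_univ_succ]

section Parts

variable {L : Type*} [LieRing L] {V : Type*} [AddCommGroup V] {n : ℕ}

/-- The first sum of the Chevalley–Eilenberg differential, involving the action of `L` on `V`. -/
def actionPart [LieRingModule L V] (f : (Fin n → L) → V) (x : Fin (n + 1) → L) : V :=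
  ∑ i : Fin (n + 1), (-1 : ℤ) ^ (i : ℕ) • ⁅x i, f (x ∘ i.succAbove)⁆

/-- The second sum of the Chevalley–Eilenberg differential, involving the bracket of `L`. -/
def bracketPart (f : (Fin (n + 1) → L) → V) (x : Fin (n + 2) → L) : V :=
  ∑ i : Fin (n + 2), ∑ j : Fin (n + 2),
    if h : (i : ℕ) < (j : ℕ) then
      (-1 : ℤ) ^ ((i : ℕ) + (j : ℕ)) •
        f (Fin.cons ⁅x i, x j⁆ fun k =>
          x (j.succAbove ((i.castLT (h.trans_le (Nat.lt_succ_iff.mp j.isLt))).succAbove k)))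
    else 0

variable (K : Type*) [Field K] [Module K V]

local notation "ι" => contract K

theorem actionPart_cons [LieRingModule L V] (y : L) (f : (Fin (n + 1) → L) → V)
    (z : Fin (n + 1) → L) :
    actionPart f (Fin.cons y z) = ⁅y, f z⁆ - actionPart (ι y f) z := by
  have hzero : (Fin.cons y z : Fin (n + 2) → L) ∘ Fin.succAbove 0 = z := by
    funext i
    simp
  simp only [actionPart, contract_apply, Fin.sum_univ_succ (n := n + 1), hzero, Fin.cons_zero,
    Fin.cons_succ, Fin.cons_comp_succ_succAbove, Fin.val_zero, Fin.val_succ, pow_zero, one_smul,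
    pow_succ, mul_neg_one, neg_smul, Finset.sum_neg_distrib, sub_eq_add_neg]
  rfl

variable {K} [LieAlgebra K L]

theorem sum_bracket_front_eq_neg_sum_update (y : L) {f : (Fin (n + 1) → L) → V}
    (hf : f ∈ Cc K L V (n + 1)) (z : Fin (n + 1) → L) :
    ∑ j : Fin (n + 1), (-1 : ℤ) ^ ((j : ℕ) + 1) • f (Fin.cons ⁅y, z j⁆ (z ∘ j.succAbove)) =
      -∑ j, f (Function.update z j ⁅y, z j⁆) := by
  simp only [pow_succ, mul_neg_one, neg_smul, Finset.sum_neg_distrib,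
    neg_one_pow_smul_cons_eq_update hf]

theorem bracketPart_cons (y : L) (f : (Fin (n + 1) → L) → V) (z : Fin (n + 1) → L) :
    bracketPart f (Fin.cons y z) =
      ∑ j : Fin (n + 1), (-1 : ℤ) ^ ((j : ℕ) + 1) • f (Fin.cons ⁅y, z j⁆ (z ∘ j.succAbove)) +
        ∑ i : Fin (n + 1), ∑ j : Fin (n + 1),
          if h : (i : ℕ) < (j : ℕ) then
            (-1 : ℤ) ^ ((i : ℕ) + (j : ℕ)) •
              f (Fin.cons ⁅z i, z j⁆ fun k => (Fin.cons y z : Fin (n + 2) → L)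
                (j.succ.succAbove
                  ((i.castLT (h.trans_le (Nat.lt_succ_iff.mp j.isLt))).succ.succAbove k)))
          else 0 := by
  rw [bracketPart, sum_sum_lt_succ]
  congr 1
  · refine Finset.sum_congr rfl fun j _ => ?_
    simp only [Fin.cons_zero, Fin.cons_succ, Fin.val_zero, Fin.val_succ, zero_add]
    congr 3
    funext k
    change (Fin.cons y z : Fin (n + 2) → L) (j.succ.succAbove ((0 : Fin (n + 1)).succAbove k)) = _
    simp
  · refine Finset.sum_congr rfl fun i _ => Finset.sum_congr rfl fun j _ => ?_
    have hsign : (-1 : ℤ) ^ ((i : ℕ) + 1 + ((j : ℕ) + 1)) = (-1) ^ ((i : ℕ) + (j : ℕ)) := by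
      ring
    simp only [Fin.cons_succ, Fin.val_succ, hsign]
    rfl

theorem bracketPart_cons_of_mem_Cc_one (y : L) {f : (Fin 1 → L) → V} (hf : f ∈ Cc K L V 1)
    (z : Fin 1 → L) :
    bracketPart f (Fin.cons y z) = -∑ j, f (Function.update z j ⁅y, z j⁆) := by
  rw [bracketPart_cons, sum_bracket_front_eq_neg_sum_update y hf]
  simp

theorem bracketPart_cons_of_mem_Cc (y : L) {f : (Fin (n + 2) → L) → V}
    (hf : f ∈ Cc K L V (n + 2)) (z : Fin (n + 2) → L) :
    bracketPart f (Fin.cons y z) =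
      -∑ j, f (Function.update z j ⁅y, z j⁆) - bracketPart (ι y f) z := by
  rw [bracketPart_cons, sum_bracket_front_eq_neg_sum_update y hf, sub_eq_add_neg, bracketPart]
  simp only [← Finset.sum_neg_distrib]
  congr 1
  refine Finset.sum_congr rfl fun i _ => Finset.sum_congr rfl fun j _ => ?_
  split_ifs with h
  · have hswap := congrFun (contract_contract_swap y ⁅z i, z j⁆ hf) fun k =>
      z (j.succAbove ((i.castLT (h.trans_le (Nat.lt_succ_iff.mp j.isLt))).succAbove k))
    simp only [contract_apply, Pi.neg_apply] at hswap ⊢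
    rw [← smul_neg, ← hswap]
    congr 3
    funext k
    cases k using Fin.cases <;> simp
  · exact neg_zero.symm

end Parts

variable {K : Type*} [Field K]
variable {L : Type*} [LieRing L] [LieAlgebra K L]
variable {V : Type*} [AddCommGroup V] [Module K V] [LieRingModule L V] [LieModule K L V]
variable {n : ℕ}

local notation "ι" => contract K
local notation "θ" => lieDeriv K
local notation "δ" => dRaw K _ _ _

theorem dRaw_zero (f : (Fin 0 → L) → V) : δ f = actionPart f := by
  funext x
  simp [dRaw, dAux, actionPart, Subsingleton.elim (x ∘ Fin.succ) Fin.elim0]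

theorem dRaw_succ (f : (Fin (n + 1) → L) → V) : δ f = actionPart f + bracketPart f := rfl

theorem contract_dRaw_zero (y : L) (f : (Fin 0 → L) → V) : ι y (δ f) = θ y f := by
  funext z
  rw [Subsingleton.elim z Fin.elim0]
  simp [contract_apply, lieDeriv_apply, dRaw, dAux]

theorem contract_dRaw_succ (y : L) {f : (Fin (n + 1) → L) → V} (hf : f ∈ Cc K L V (n + 1)) :
    ι y (δ f) = θ y f - δ (ι y f) := by
  funext z
  rw [contract_apply, dRaw_succ, Pi.add_apply, actionPart_cons K, Pi.sub_apply, lieDeriv_apply]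
  cases n with
  | zero =>
    rw [bracketPart_cons_of_mem_Cc_one y hf, dRaw_zero]
    abel
  | succ n =>
    rw [bracketPart_cons_of_mem_Cc y hf, dRaw_succ, Pi.add_apply]
    abel

theorem isLinearMap_contract_dRaw {f : (Fin n → L) → V} (hf : f ∈ Cc K L V n) :
    IsLinearMap K fun y => ι y (δ f) := by
  have hθ := isLinearMap_lieDeriv hf
  cases n with
  | zero => simpa only [contract_dRaw_zero] using hθ
  | succ n =>
    have hι := isLinearMap_contract hf
    refine ⟨fun a b => ?_, fun c a => ?_⟩
    · simp only [contract_dRaw_succ _ hf, hθ.map_add, hι.map_add, map_add]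
      abel
    · simp only [contract_dRaw_succ _ hf, hθ.map_smul, hι.map_smul, map_smul, smul_sub]

theorem contract_contract_dRaw_self (y : L) {f : (Fin (n + 1) → L) → V}
    (hf : f ∈ Cc K L V (n + 1)) : ι y (ι y (δ f)) = 0 := by
  rw [contract_dRaw_succ y hf, map_sub, contract_lieDeriv, lie_self,
    (isLinearMap_contract hf).map_zero, sub_zero]
  cases n with
  | zero => rw [contract_dRaw_zero, sub_self]
  | succ n =>
    rw [contract_dRaw_succ y (contract_mem_Cc y hf), contract_contract_self y hf, map_zero,
      sub_zero, sub_self]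

theorem dRaw_mem_Cc {f : (Fin n → L) → V} (hf : f ∈ Cc K L V n) : δ f ∈ Cc K L V (n + 1) := by
  induction n with
  | zero => exact mem_Cc_one_of_contract (isLinearMap_contract_dRaw hf)
  | succ n ih =>
    refine mem_Cc_add_two_of_contract (fun y => ?_) (isLinearMap_contract_dRaw hf)
      fun y => contract_contract_dRaw_self y hf
    rw [contract_dRaw_succ y hf]
    exact Submodule.sub_mem _ (lieDeriv_mem_Cc y hf) (ih (contract_mem_Cc y hf))

theorem dRaw_lieDeriv (x : L) {f : (Fin n → L) → V} (hf : f ∈ Cc K L V n) :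
    δ (θ x f) = θ x (δ f) := by
  induction n with
  | zero =>
    refine eq_of_contract_eq K fun y => ?_
    rw [contract_dRaw_zero, contract_lieDeriv, contract_dRaw_zero, contract_dRaw_zero,
      lieDeriv_lieDeriv x y hf, add_sub_cancel_right]
  | succ n ih =>
    refine eq_of_contract_eq K fun y => ?_
    rw [contract_dRaw_succ _ (lieDeriv_mem_Cc x hf), contract_lieDeriv, contract_lieDeriv,
      contract_dRaw_succ _ hf, contract_dRaw_succ _ hf, map_sub, ih (contract_mem_Cc y hf), map_sub,
      lieDeriv_lieDeriv x y hf]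
    abel

theorem dRaw_dRaw {f : (Fin n → L) → V} (hf : f ∈ Cc K L V n) : δ (δ f) = 0 := by
  induction n with
  | zero =>
    refine eq_of_contract_eq K fun y => ?_
    rw [contract_dRaw_succ y (dRaw_mem_Cc hf), contract_dRaw_zero, dRaw_lieDeriv y hf, sub_self,
      map_zero]
  | succ n ih =>
    refine eq_of_contract_eq K fun y => ?_
    rw [contract_dRaw_succ y (dRaw_mem_Cc hf), contract_dRaw_succ y hf, map_sub,
      dRaw_lieDeriv y hf, ih (contract_mem_Cc y hf), sub_zero, sub_self, map_zero]

end Differential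

section Pullback

variable {K : Type*} [Field K] {L M : Type*}
variable [LieRing L] [LieAlgebra K L] [LieRing M] [LieAlgebra K M]
variable {V : Type*} [AddCommGroup V] [Module K V] {n : ℕ}

/-- Pullback of cochains along a linear map, precomposing it in every slot. -/
def pullback (φ : M →ₗ[K] L) : ((Fin n → L) → V) →ₗ[K] ((Fin n → M) → V) :=
  LinearMap.funLeft K V fun y => φ ∘ y

theorem pullback_apply (φ : M →ₗ[K] L) (f : (Fin n → L) → V) (y : Fin n → M) :
    pullback φ f y = f (φ ∘ y) := rfl

theorem pullback_mem_Cc (φ : M →ₗ[K] L) {f : (Fin n → L) → V} (hf : f ∈ Cc K L V n) :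
    pullback φ f ∈ Cc K M V n := by
  obtain ⟨g, rfl⟩ := mem_Cc_iff_exists_alternatingMap.1 hf
  exact mem_Cc_iff_exists_alternatingMap.2 ⟨g.compLinearMap φ, rfl⟩

theorem pullback_pullback_of_leftInverse {φ : M →ₗ[K] L} {π : L →ₗ[K] M}
    (h : Function.LeftInverse π φ) (f : (Fin n → M) → V) : pullback φ (pullback π f) = f :=
  funext fun y => congrArg f (funext fun i => h (y i))

theorem contract_pullback (φ : M →ₗ[K] L) (a : M) (f : (Fin (n + 1) → L) → V) :
    contract K a (pullback φ f) = pullback φ (contract K (φ a) f) := by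
  funext y
  simp only [contract_apply, pullback_apply, Fin.comp_cons]

variable [LieRingModule L V] [LieModule K L V] [LieRingModule M V] [LieModule K M V]

theorem dRaw_pullback (φ : M →ₗ⁅K⁆ L) (hφ : ∀ (a : M) (v : V), ⁅φ a, v⁆ = ⁅a, v⁆)
    (f : (Fin n → L) → V) :
    dRaw K M V n (pullback (φ : M →ₗ[K] L) f) = pullback (φ : M →ₗ[K] L) (dRaw K L V n f) := by
  funext y
  cases n with
  | zero =>
    simp only [dRaw_zero, actionPart, pullback_apply, Function.comp_apply, LieHom.coe_toLinearMap,
      hφ, Function.comp_assoc]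
  | succ n =>
    simp only [dRaw_succ, Pi.add_apply, actionPart, bracketPart, pullback_apply,
      Function.comp_apply, LieHom.coe_toLinearMap, hφ, Fin.comp_cons, LieHom.map_lie,
      Function.comp_assoc]
    rfl

end Pullback

section Restriction

variable {K : Type*} [Field K] {L : Type*} [LieRing L] [LieAlgebra K L]
variable {V : Type*} [AddCommGroup V] [Module K V] {I : LieSubalgebra K L} {n : ℕ}

/-- Restriction of cochains of `L` to a subalgebra. -/
def restrict (I : LieSubalgebra K L) : ((Fin n → L) → V) →ₗ[K] ((Fin n → I) → V) :=
  pullback (I.incl : I →ₗ[K] L)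

theorem restrict_apply (f : (Fin n → L) → V) (y : Fin n → I) :
    restrict I f y = f fun i => (y i : L) := rfl

theorem restrict_mem_Cc {f : (Fin n → L) → V} (hf : f ∈ Cc K L V n) :
    restrict I f ∈ Cc K I V n :=
  pullback_mem_Cc _ hf

theorem contract_restrict (a : I) (f : (Fin (n + 1) → L) → V) :
    contract K a (restrict I f) = restrict I (contract K (a : L) f) :=
  contract_pullback _ a f

theorem exists_restrict_eq {g : (Fin n → I) → V} (hg : g ∈ Cc K I V n) :
    ∃ f ∈ Cc K L V n, restrict I f = g := by
  obtain ⟨π, hπ⟩ := (I.incl : I →ₗ[K] L).exists_leftInverse_of_injective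
    (LinearMap.ker_eq_bot.2 Subtype.coe_injective)
  exact ⟨pullback π g, pullback_mem_Cc π hg,
    pullback_pullback_of_leftInverse (LinearMap.congr_fun hπ) g⟩

variable [LieRingModule L V] [LieModule K L V]

theorem dRaw_restrict (f : (Fin n → L) → V) :
    dRaw K I V n (restrict I f) = restrict I (dRaw K L V n f) :=
  dRaw_pullback I.incl (fun _ _ => rfl) f

variable (hI : ∀ a b : L, b ∈ I → ⁅a, b⁆ ∈ I) (x : L)

local notation "ϑ" => actRaw K L V I hI x

theorem actRaw_restrict (f : (Fin n → L) → V) :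
    ϑ n (restrict I f) = restrict I (lieDeriv K x f) := by
  funext y
  simp only [actRaw, LinearMap.coe_mk, AddHom.coe_mk, restrict_apply, lieDeriv_apply]
  congr 1
  refine Finset.sum_congr rfl fun i _ => congrArg f ?_
  exact Function.comp_update (Subtype.val : I → L) y i _

theorem actRaw_mem_Cc {g : (Fin n → I) → V} (hg : g ∈ Cc K I V n) : ϑ n g ∈ Cc K I V n := by
  obtain ⟨f, hf, rfl⟩ := exists_restrict_eq hg
  rw [actRaw_restrict]
  exact restrict_mem_Cc (lieDeriv_mem_Cc x hf)

theorem dRaw_actRaw {g : (Fin n → I) → V} (hg : g ∈ Cc K I V n) :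
    dRaw K I V n (ϑ n g) = ϑ (n + 1) (dRaw K I V n g) := by
  obtain ⟨f, hf, rfl⟩ := exists_restrict_eq hg
  rw [actRaw_restrict, dRaw_restrict, dRaw_restrict, actRaw_restrict, dRaw_lieDeriv x hf]

theorem restrict_contract_dRaw_succ {f : (Fin (n + 1) → L) → V} (hf : f ∈ Cc K L V (n + 1)) :
    restrict I (contract K x (dRaw K L V (n + 1) f)) =
      ϑ (n + 1) (restrict I f) - dRaw K I V n (restrict I (contract K x f)) := by
  rw [contract_dRaw_succ x hf, map_sub, actRaw_restrict, dRaw_restrict]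

theorem actRaw_restrict_sub_mem_Bc {f : (Fin n → L) → V} (hf : f ∈ Cc K L V n) :
    ϑ n (restrict I f) - restrict I (contract K x (dRaw K L V n f)) ∈ Bc K I V n := by
  cases n with
  | zero =>
    rw [contract_dRaw_zero, actRaw_restrict, sub_self]
    exact Submodule.zero_mem _
  | succ n =>
    rw [restrict_contract_dRaw_succ hI x hf, sub_sub_cancel]
    exact Submodule.mem_map_of_mem (restrict_mem_Cc (contract_mem_Cc x hf))

end Restriction

section Cohomology

variable {K : Type*} [Field K]
variable {L : Type*} [LieRing L] [LieAlgebra K L]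
variable {V : Type*} [AddCommGroup V] [Module K V] [LieRingModule L V] [LieModule K L V]
variable {M : Type*} [LieRing M] [LieAlgebra K M]
variable {W : Type*} [AddCommGroup W] [Module K W] [LieRingModule M W] [LieModule K M W]
variable {n m : ℕ}

theorem mem_Zc_iff {f : (Fin n → L) → V} :
    f ∈ Zc K L V n ↔ f ∈ Cc K L V n ∧ dRaw K L V n f = 0 := Iff.rfl

theorem mem_Bc_succ_iff {f : (Fin (n + 1) → L) → V} :
    f ∈ Bc K L V (n + 1) ↔ ∃ u ∈ Cc K L V n, dRaw K L V n u = f := Iff.rfl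

theorem map_mem_Bc_of_map_dRaw (φ : ∀ n, ((Fin n → L) → V) →ₗ[K] ((Fin n → M) → W))
    (hC : ∀ (n) (f : (Fin n → L) → V), f ∈ Cc K L V n → φ n f ∈ Cc K M W n)
    (hd : ∀ (n) (f : (Fin n → L) → V), f ∈ Cc K L V n →
      dRaw K M W n (φ n f) = φ (n + 1) (dRaw K L V n f))
    {f : (Fin n → L) → V} (hf : f ∈ Bc K L V n) : φ n f ∈ Bc K M W n := by
  cases n with
  | zero =>
    obtain rfl := (Submodule.mem_bot K).1 hf
    simp
  | succ n =>
    obtain ⟨u, hu, rfl⟩ := mem_Bc_succ_iff.1 hf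
    exact ⟨φ n u, hC n u hu, hd n u hu⟩

instance finite_Hq [FiniteDimensional K L] [FiniteDimensional K V] :
    FiniteDimensional K (Hq K L V n) :=
  have : FiniteDimensional K (Zc K L V n) := Submodule.finiteDimensional_of_le inf_le_left
  inferInstance

/-- The cohomology class of a cocycle. -/
def Hq.mk (f : (Fin n → L) → V) (hf : f ∈ Zc K L V n) : Hq K L V n :=
  Submodule.Quotient.mk ⟨f, hf⟩

theorem Hq.exists_mk_eq (c : Hq K L V n) : ∃ f hf, Hq.mk f hf = c := by
  obtain ⟨⟨f, hf⟩, rfl⟩ := Submodule.Quotient.mk_surjective _ c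
  exact ⟨f, hf, rfl⟩

theorem Hq.mk_eq_mk_iff {f g : (Fin n → L) → V} {hf : f ∈ Zc K L V n} {hg : g ∈ Zc K L V n} :
    Hq.mk f hf = Hq.mk g hg ↔ f - g ∈ Bc K L V n :=
  Submodule.Quotient.eq _

theorem Hq.mk_eq_zero_iff {f : (Fin n → L) → V} {hf : f ∈ Zc K L V n} :
    Hq.mk f hf = 0 ↔ f ∈ Bc K L V n :=
  Submodule.Quotient.mk_eq_zero _

/-- The map on cohomology induced by a linear map of cochains, possibly shifting degrees, that
preserves cocycles and coboundaries. -/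
def Hq.map (φ : ((Fin n → L) → V) →ₗ[K] ((Fin m → M) → W))
    (hZ : ∀ f ∈ Zc K L V n, φ f ∈ Zc K M W m) (hB : ∀ f ∈ Bc K L V n, φ f ∈ Bc K M W m) :
    Hq K L V n →ₗ[K] Hq K M W m :=
  Submodule.mapQ _ _ (φ.restrict hZ) fun f hf => hB f hf

end Cohomology

section IdealCohomology

variable {K : Type*} [Field K] {L : Type*} [LieRing L] [LieAlgebra K L]
variable {V : Type*} [AddCommGroup V] [Module K V] [LieRingModule L V] [LieModule K L V]
variable {I : LieSubalgebra K L} {n : ℕ}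

theorem restrict_mem_Zc {f : (Fin n → L) → V} (hf : f ∈ Zc K L V n) :
    restrict I f ∈ Zc K I V n := by
  refine mem_Zc_iff.2 ⟨restrict_mem_Cc hf.1, ?_⟩
  rw [dRaw_restrict, (mem_Zc_iff.1 hf).2, map_zero]

theorem restrict_mem_Bc {f : (Fin n → L) → V} (hf : f ∈ Bc K L V n) :
    restrict I f ∈ Bc K I V n :=
  map_mem_Bc_of_map_dRaw (fun _ => restrict I) (fun _ _ => restrict_mem_Cc)
    (fun _ f _ => dRaw_restrict f) hf

variable (V I n) in
/-- The restriction map `Hⁿ(L, V) → Hⁿ(I, V)`. -/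
def resHq : Hq K L V n →ₗ[K] Hq K I V n :=
  Hq.map (restrict I) (fun _ => restrict_mem_Zc) fun _ => restrict_mem_Bc

theorem resHq_mk {f : (Fin n → L) → V} (hf : f ∈ Zc K L V n) :
    resHq V I n (Hq.mk f hf) = Hq.mk (restrict I f) (restrict_mem_Zc hf) := rfl

variable (hI : ∀ a b : L, b ∈ I → ⁅a, b⁆ ∈ I) (x : L)

local notation "ϑ" => actRaw K L V I hI x

theorem actRaw_mem_Zc {f : (Fin n → I) → V} (hf : f ∈ Zc K I V n) : ϑ n f ∈ Zc K I V n := by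
  refine mem_Zc_iff.2 ⟨actRaw_mem_Cc hI x hf.1, ?_⟩
  rw [dRaw_actRaw hI x hf.1, (mem_Zc_iff.1 hf).2, map_zero]

theorem actRaw_mem_Bc {f : (Fin n → I) → V} (hf : f ∈ Bc K I V n) : ϑ n f ∈ Bc K I V n :=
  map_mem_Bc_of_map_dRaw (actRaw K L V I hI x) (fun _ _ => actRaw_mem_Cc hI x)
    (fun _ _ => dRaw_actRaw hI x) hf

variable (V n) in
/-- The action of `x ∈ L` on the cohomology `Hⁿ(I, V)` of an ideal `I`. -/
def actHq : Hq K I V n →ₗ[K] Hq K I V n :=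
  Hq.map (ϑ n) (fun _ => actRaw_mem_Zc hI x) fun _ => actRaw_mem_Bc hI x

theorem actHq_mk {f : (Fin n → I) → V} (hf : f ∈ Zc K I V n) :
    actHq V n hI x (Hq.mk f hf) = Hq.mk (ϑ n f) (actRaw_mem_Zc hI x hf) := rfl

theorem ker_actHq : LinearMap.ker (actHq V n hI x) = HInv K L V I hI x n := by
  ext c
  refine ⟨fun hc => ?_, ?_⟩
  · obtain ⟨f, hf, rfl⟩ := Hq.exists_mk_eq c
    exact ⟨⟨f, hf⟩, ⟨hf, Hq.mk_eq_zero_iff.1 hc⟩, rfl⟩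
  · rintro ⟨⟨f, hf⟩, ⟨_, hB⟩, rfl⟩
    exact Hq.mk_eq_zero_iff.2 hB

theorem mk_mem_HInv_iff {f : (Fin n → I) → V} {hf : f ∈ Zc K I V n} :
    Hq.mk f hf ∈ HInv K L V I hI x n ↔ ϑ n f ∈ Bc K I V n := by
  rw [← ker_actHq, LinearMap.mem_ker, actHq_mk, Hq.mk_eq_zero_iff]

end IdealCohomology

section Wedge

variable {K : Type*} [Field K] {L : Type*} [LieRing L] [LieAlgebra K L]
variable {V : Type*} [AddCommGroup V] [Module K V] {n : ℕ}

/-- The exterior product `coord ∧ f` of a linear form and a cochain. -/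
def wedge (coord : Module.Dual K L) : ((Fin n → L) → V) →ₗ[K] ((Fin (n + 1) → L) → V) where
  toFun f y := ∑ i : Fin (n + 1), (-1 : ℤ) ^ (i : ℕ) • coord (y i) • f (y ∘ i.succAbove)
  map_add' f g := by
    funext y
    simp only [Pi.add_apply, smul_add, Finset.sum_add_distrib]
  map_smul' c f := by
    funext y
    simp only [Pi.smul_apply, RingHom.id_apply, Finset.smul_sum, smul_comm c]

theorem wedge_apply (coord : Module.Dual K L) (f : (Fin n → L) → V) (y : Fin (n + 1) → L) :
    wedge coord f y =
      ∑ i : Fin (n + 1), (-1 : ℤ) ^ (i : ℕ) • coord (y i) • f (y ∘ i.succAbove) := rfl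

theorem wedge_mem_Cc (coord : Module.Dual K L) {f : (Fin n → L) → V} (hf : f ∈ Cc K L V n) :
    wedge coord f ∈ Cc K L V (n + 1) := by
  obtain ⟨g, rfl⟩ := mem_Cc_iff_exists_alternatingMap.1 hf
  refine mem_Cc_iff_exists_alternatingMap.2
    ⟨AlternatingMap.alternatizeUncurryFin (coord.smulRight g), funext fun y => ?_⟩
  rw [AlternatingMap.alternatizeUncurryFin_apply]
  rfl

variable {I : LieSubalgebra K L} {coord : Module.Dual K L}

theorem restrict_wedge (hcoord : ∀ a ∈ I, coord a = 0) (f : (Fin n → L) → V) :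
    restrict I (wedge coord f) = 0 := by
  funext y
  simp [restrict_apply, wedge_apply, hcoord]

theorem restrict_contract_wedge (hcoord : ∀ a ∈ I, coord a = 0) (x : L) (f : (Fin n → L) → V) :
    restrict I (contract K x (wedge coord f)) = coord x • restrict I f := by
  funext y
  simp [restrict_apply, contract_apply, wedge_apply, Fin.sum_univ_succ, hcoord,
    Function.comp_def]

end Wedge

section Splitting

variable {K : Type*} [Field K] {L : Type*} [LieRing L] [LieAlgebra K L]
variable {I : LieSubalgebra K L} {x : L}

/-- A decomposition `L = I ⊕ K x` of vector spaces, given by its two coordinate maps. -/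
structure Splitting (I : LieSubalgebra K L) (x : L) where
  /-- The projection to `I` along `x`. -/
  proj : L →ₗ[K] I
  /-- The coefficient of `x`. -/
  coord : Module.Dual K L
  proj_add_coord_smul : ∀ y, (proj y : L) + coord y • x = y
  coord_eq_zero : ∀ a ∈ I, coord a = 0
  coord_self : coord x = 1

theorem exists_dual_of_finrank_quotient_eq_one
    (hcodim : Module.finrank K (L ⧸ I.toSubmodule) = 1) (hx : x ∉ I) :
    ∃ coord : Module.Dual K L, LinearMap.ker coord = I.toSubmodule ∧ coord x = 1 := by
  have hcoatom : IsCoatom I.toSubmodule :=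
    isSimpleModule_iff_isCoatom.1 (isSimpleModule_iff_finrank_eq_one.2 hcodim)
  obtain ⟨coord, hx0, hle⟩ := Submodule.exists_le_ker_of_notMem (p := I.toSubmodule) hx
  refine ⟨(coord x)⁻¹ • coord, ?_, inv_mul_cancel₀ hx0⟩
  rw [LinearMap.ker_smul _ _ (inv_ne_zero hx0)]
  exact (hcoatom.le_iff_eq fun htop => hx0 <| by simp [LinearMap.ker_eq_top.1 htop]).1 hle

theorem nonempty_splitting (hcodim : Module.finrank K (L ⧸ I.toSubmodule) = 1) (hx : x ∉ I) :
    Nonempty (Splitting I x) := by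
  obtain ⟨coord, hker, hcoord⟩ := exists_dual_of_finrank_quotient_eq_one hcodim hx
  have hmem (y : L) : (LinearMap.id - coord.smulRight x : L →ₗ[K] L) y ∈ I.toSubmodule := by
    simp [← hker, hcoord]
  exact ⟨{
    proj := LinearMap.codRestrict I.toSubmodule _ hmem
    coord := coord
    proj_add_coord_smul := fun y => sub_add_cancel y (coord y • x)
    coord_eq_zero := fun a ha => LinearMap.mem_ker.1 (hker ▸ ha)
    coord_self := hcoord }⟩

namespace Splitting

theorem proj_coe (S : Splitting I x) (a : I) : S.proj a = a :=
  Subtype.ext <| by simpa [S.coord_eq_zero a a.2] using S.proj_add_coord_smul a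

variable {V : Type*} [AddCommGroup V] [Module K V] {n : ℕ}

theorem eq_zero_of_contract_eq_zero (S : Splitting I x) {f : (Fin (n + 1) → L) → V}
    (hf : f ∈ Cc K L V (n + 1)) (hx : contract K x f = 0)
    (hcoe : ∀ a : I, contract K (a : L) f = 0) : f = 0 := by
  have hlin := isLinearMap_contract hf
  refine eq_of_contract_eq K fun y => ?_
  rw [← S.proj_add_coord_smul y, hlin.map_add, hlin.map_smul, hcoe, hx, smul_zero, add_zero,
    map_zero]

theorem eq_zero_of_restrict_eq_zero (S : Splitting I x) {f : (Fin (n + 1) → L) → V}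
    (hf : f ∈ Cc K L V (n + 1)) (hres : restrict I f = 0)
    (hres_contract : restrict I (contract K x f) = 0) : f = 0 := by
  have hres_contract_coe (a : I) : restrict I (contract K (a : L) f) = 0 := by
    rw [← contract_restrict, hres, map_zero]
  induction n with
  | zero =>
    have hzero {g : (Fin 0 → L) → V} (hg : restrict I g = 0) : g = 0 := by
      funext z
      rw [Subsingleton.elim z fun i => ((Fin.elim0 i : I) : L)]
      exact congrFun hg Fin.elim0
    exact S.eq_zero_of_contract_eq_zero hf (hzero hres_contract)
      fun a => hzero (hres_contract_coe a)
  | succ n ih =>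
    have ih' {g : (Fin (n + 1) → L) → V} (hg : g ∈ Cc K L V (n + 1)) (hres : restrict I g = 0)
        (hcontr : restrict I (contract K x g) = 0) : g = 0 :=
      ih hg hres hcontr fun a => by rw [← contract_restrict, hres, map_zero]
    have hx : contract K x f = 0 := ih' (contract_mem_Cc x hf) hres_contract <| by
      rw [contract_contract_self x hf, map_zero]
    refine S.eq_zero_of_contract_eq_zero hf hx fun a => ?_
    refine ih' (contract_mem_Cc _ hf) (hres_contract_coe a) ?_
    rw [contract_contract_swap x a hf, hx, map_zero, neg_zero, map_zero]

theorem eq_of_restrict_eq (S : Splitting I x) {f g : (Fin (n + 1) → L) → V}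
    (hf : f ∈ Cc K L V (n + 1)) (hg : g ∈ Cc K L V (n + 1)) (hres : restrict I f = restrict I g)
    (hres_contract : restrict I (contract K x f) = restrict I (contract K x g)) : f = g := by
  refine sub_eq_zero.1 (S.eq_zero_of_restrict_eq_zero (Submodule.sub_mem _ hf hg) ?_ ?_)
  · rw [map_sub, hres, sub_self]
  · rw [map_sub, map_sub, hres_contract, sub_self]

/-- The cochain `coord ∧ proj^* h` of `L`; these are the cochains of `L` vanishing on `I`. -/
def coordWedge (S : Splitting I x) : ((Fin n → I) → V) →ₗ[K] ((Fin (n + 1) → L) → V) :=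
  wedge S.coord ∘ₗ pullback S.proj

theorem coordWedge_mem_Cc (S : Splitting I x) {h : (Fin n → I) → V} (hh : h ∈ Cc K I V n) :
    S.coordWedge h ∈ Cc K L V (n + 1) :=
  wedge_mem_Cc _ (pullback_mem_Cc _ hh)

theorem restrict_coordWedge (S : Splitting I x) (h : (Fin n → I) → V) :
    restrict I (S.coordWedge h) = 0 :=
  restrict_wedge S.coord_eq_zero _

theorem restrict_contract_coordWedge (S : Splitting I x) (h : (Fin n → I) → V) :
    restrict I (contract K x (S.coordWedge h)) = h := by
  rw [coordWedge, LinearMap.comp_apply, restrict_contract_wedge S.coord_eq_zero, S.coord_self,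
    one_smul]
  exact pullback_pullback_of_leftInverse (φ := (I.incl : I →ₗ[K] L)) S.proj_coe h

theorem coordWedge_restrict_contract (S : Splitting I x) {f : (Fin (n + 1) → L) → V}
    (hf : f ∈ Cc K L V (n + 1)) (hres : restrict I f = 0) :
    S.coordWedge (restrict I (contract K x f)) = f := by
  refine S.eq_of_restrict_eq (S.coordWedge_mem_Cc (restrict_mem_Cc (contract_mem_Cc x hf))) hf ?_ ?_
  · rw [restrict_coordWedge, hres]
  · rw [restrict_contract_coordWedge]

theorem exists_restrict_eq_and_restrict_contract_eq (S : Splitting I x)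
    {g : (Fin (n + 1) → I) → V} {h : (Fin n → I) → V} (hg : g ∈ Cc K I V (n + 1))
    (hh : h ∈ Cc K I V n) :
    ∃ f ∈ Cc K L V (n + 1), restrict I f = g ∧ restrict I (contract K x f) = h := by
  obtain ⟨f, hf, rfl⟩ := exists_restrict_eq hg
  refine ⟨f + S.coordWedge (h - restrict I (contract K x f)), ?_, ?_, ?_⟩
  · exact Submodule.add_mem _ hf <| S.coordWedge_mem_Cc <|
      Submodule.sub_mem _ hh (restrict_mem_Cc (contract_mem_Cc x hf))
  · rw [map_add, restrict_coordWedge, add_zero]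
  · rw [map_add, map_add, restrict_contract_coordWedge, add_sub_cancel]

variable [LieRingModule L V] [LieModule K L V]

theorem dRaw_coordWedge (S : Splitting I x) (hI : ∀ a b : L, b ∈ I → ⁅a, b⁆ ∈ I)
    {h : (Fin n → I) → V} (hh : h ∈ Cc K I V n) :
    dRaw K L V (n + 1) (S.coordWedge h) = -S.coordWedge (dRaw K I V n h) := by
  have hwedge := S.coordWedge_mem_Cc hh
  refine S.eq_of_restrict_eq (dRaw_mem_Cc hwedge)
    (Submodule.neg_mem _ (S.coordWedge_mem_Cc (dRaw_mem_Cc hh))) ?_ ?_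
  · rw [← dRaw_restrict, map_neg, restrict_coordWedge, restrict_coordWedge, map_zero, neg_zero]
  · rw [restrict_contract_dRaw_succ hI x hwedge, restrict_coordWedge,
      restrict_contract_coordWedge, map_neg, map_neg, restrict_contract_coordWedge, map_zero,
      zero_sub]

theorem coordWedge_mem_Zc (S : Splitting I x) (hI : ∀ a b : L, b ∈ I → ⁅a, b⁆ ∈ I)
    {h : (Fin n → I) → V} (hh : h ∈ Zc K I V n) :
    S.coordWedge h ∈ Zc K L V (n + 1) := by
  refine mem_Zc_iff.2 ⟨S.coordWedge_mem_Cc hh.1, ?_⟩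
  rw [S.dRaw_coordWedge hI hh.1, (mem_Zc_iff.1 hh).2, map_zero, neg_zero]

theorem coordWedge_mem_Bc (S : Splitting I x) (hI : ∀ a b : L, b ∈ I → ⁅a, b⁆ ∈ I)
    {h : (Fin n → I) → V} (hh : h ∈ Bc K I V n) :
    S.coordWedge h ∈ Bc K L V (n + 1) := by
  cases n with
  | zero =>
    obtain rfl := (Submodule.mem_bot K).1 hh
    simp
  | succ n =>
    obtain ⟨u, hu, rfl⟩ := mem_Bc_succ_iff.1 hh
    refine ⟨-S.coordWedge u, Submodule.neg_mem _ (S.coordWedge_mem_Cc hu), ?_⟩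
    rw [map_neg, S.dRaw_coordWedge hI hu, neg_neg]

variable (V n)

theorem range_resHq (S : Splitting I x) (hI : ∀ a b : L, b ∈ I → ⁅a, b⁆ ∈ I) :
    LinearMap.range (resHq V I (n + 1)) = HInv K L V I hI x (n + 1) := by
  ext c
  refine ⟨?_, fun hc => ?_⟩
  · rintro ⟨c, rfl⟩
    obtain ⟨f, hf, rfl⟩ := Hq.exists_mk_eq c
    have hB := actRaw_restrict_sub_mem_Bc hI x hf.1
    rw [(mem_Zc_iff.1 hf).2, map_zero, map_zero, sub_zero] at hB
    exact (mk_mem_HInv_iff hI x).2 hB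
  · obtain ⟨g, hg, rfl⟩ := Hq.exists_mk_eq c
    obtain ⟨u, hu, hdu⟩ := mem_Bc_succ_iff.1 ((mk_mem_HInv_iff hI x).1 hc)
    obtain ⟨f, hf, rfl, rfl⟩ := S.exists_restrict_eq_and_restrict_contract_eq hg.1 hu
    have hdf : dRaw K L V (n + 1) f = 0 := by
      refine S.eq_zero_of_restrict_eq_zero (dRaw_mem_Cc hf) ?_ ?_
      · rw [← dRaw_restrict, (mem_Zc_iff.1 hg).2]
      · rw [restrict_contract_dRaw_succ hI x hf, hdu, sub_self]
    exact ⟨Hq.mk f (mem_Zc_iff.2 ⟨hf, hdf⟩), rfl⟩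

variable (S : Splitting I x) (hI : ∀ a b : L, b ∈ I → ⁅a, b⁆ ∈ I)

/-- The map `Hⁿ(I, V) → Hⁿ⁺¹(L, V)` induced by `coordWedge`. -/
def coordWedgeHq : Hq K I V n →ₗ[K] Hq K L V (n + 1) :=
  Hq.map S.coordWedge (fun _ => S.coordWedge_mem_Zc hI) fun _ => S.coordWedge_mem_Bc hI

theorem coordWedgeHq_mk {h : (Fin n → I) → V} (hh : h ∈ Zc K I V n) :
    S.coordWedgeHq V n hI (Hq.mk h hh) = Hq.mk (S.coordWedge h) (S.coordWedge_mem_Zc hI hh) := rfl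

theorem exact_coordWedgeHq_resHq :
    Function.Exact (S.coordWedgeHq V n hI) (resHq V I (n + 1)) := by
  intro c
  refine ⟨fun hc => ?_, ?_⟩
  · obtain ⟨f, hf, rfl⟩ := Hq.exists_mk_eq c
    rw [resHq_mk, Hq.mk_eq_zero_iff] at hc
    obtain ⟨u, hu, hdu⟩ := mem_Bc_succ_iff.1 hc
    obtain ⟨w, hw, rfl⟩ := exists_restrict_eq hu
    have hC : f - dRaw K L V n w ∈ Cc K L V (n + 1) := Submodule.sub_mem _ hf.1 (dRaw_mem_Cc hw)
    have hd : dRaw K L V (n + 1) (f - dRaw K L V n w) = 0 := by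
      rw [map_sub, (mem_Zc_iff.1 hf).2, dRaw_dRaw hw, sub_self]
    have hres : restrict I (f - dRaw K L V n w) = 0 := by
      rw [map_sub, ← hdu, dRaw_restrict, sub_self]
    have hZ : restrict I (contract K x (f - dRaw K L V n w)) ∈ Zc K I V n := by
      refine mem_Zc_iff.2 ⟨restrict_mem_Cc (contract_mem_Cc x hC), ?_⟩
      have hcartan := restrict_contract_dRaw_succ hI x hC
      rw [hd, hres, map_zero, map_zero, map_zero, zero_sub] at hcartan
      exact neg_eq_zero.1 hcartan.symm
    refine ⟨Hq.mk _ hZ, ?_⟩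
    rw [coordWedgeHq_mk, Hq.mk_eq_mk_iff]
    refine mem_Bc_succ_iff.2 ⟨-w, Submodule.neg_mem _ hw, ?_⟩
    rw [S.coordWedge_restrict_contract hC hres, map_neg, sub_sub_cancel_left]
  · rintro ⟨c, rfl⟩
    obtain ⟨h, hh, rfl⟩ := Hq.exists_mk_eq c
    rw [coordWedgeHq_mk, resHq_mk, Hq.mk_eq_zero_iff, restrict_coordWedge]
    exact Submodule.zero_mem _

theorem exact_actHq_coordWedgeHq :
    Function.Exact (actHq V n hI x) (S.coordWedgeHq V n hI) := by
  intro c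
  refine ⟨fun hc => ?_, ?_⟩
  · obtain ⟨h, hh, rfl⟩ := Hq.exists_mk_eq c
    rw [coordWedgeHq_mk, Hq.mk_eq_zero_iff] at hc
    obtain ⟨w, hw, hdw⟩ := mem_Bc_succ_iff.1 hc
    have hZ : restrict I w ∈ Zc K I V n := by
      refine mem_Zc_iff.2 ⟨restrict_mem_Cc hw, ?_⟩
      rw [dRaw_restrict, hdw, restrict_coordWedge]
    refine ⟨Hq.mk _ hZ, ?_⟩
    rw [actHq_mk, Hq.mk_eq_mk_iff]
    have hB := actRaw_restrict_sub_mem_Bc hI x hw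
    rwa [hdw, restrict_contract_coordWedge] at hB
  · rintro ⟨c, rfl⟩
    obtain ⟨g, hg, rfl⟩ := Hq.exists_mk_eq c
    obtain ⟨f, hf, rfl⟩ := exists_restrict_eq hg.1
    have hres : restrict I (dRaw K L V n f) = 0 := by
      rw [← dRaw_restrict, (mem_Zc_iff.1 hg).2]
    have hB := S.coordWedge_mem_Bc hI (actRaw_restrict_sub_mem_Bc hI x hf)
    rw [map_sub, S.coordWedge_restrict_contract (dRaw_mem_Cc hf) hres] at hB
    rw [actHq_mk, coordWedgeHq_mk, Hq.mk_eq_zero_iff]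
    exact (Submodule.sub_mem_iff_left _ (Submodule.mem_map_of_mem hf)).1 hB

end Splitting

end Splitting

section LinearAlgebra

theorem nonempty_quotient_range_linearEquiv_ker {K A : Type*} [Field K] [AddCommGroup A]
    [Module K A] [FiniteDimensional K A] (θ : A →ₗ[K] A) :
    Nonempty ((A ⧸ LinearMap.range θ) ≃ₗ[K] LinearMap.ker θ) := by
  refine ⟨LinearEquiv.ofFinrankEq _ _ ?_⟩
  have hrank := θ.finrank_range_add_finrank_ker
  have hquot := (LinearMap.range θ).finrank_quotient_add_finrank
  omega

theorem nonempty_linearEquiv_range_prod_ker_of_exact {K A B C : Type*} [Field K] [AddCommGroup A]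
    [Module K A] [FiniteDimensional K A] [AddCommGroup B] [Module K B] [AddCommGroup C]
    [Module K C] {θ : A →ₗ[K] A} {σ : A →ₗ[K] B} {ρ : B →ₗ[K] C} (hθσ : Function.Exact θ σ)
    (hσρ : Function.Exact σ ρ) :
    Nonempty (B ≃ₗ[K] LinearMap.range ρ × LinearMap.ker θ) := by
  obtain ⟨e⟩ := nonempty_quotient_range_linearEquiv_ker θ
  let kerEquiv : LinearMap.ker ρ ≃ₗ[K] LinearMap.ker θ :=
    LinearEquiv.ofEq _ _ hσρ.linearMap_ker_eq ≪≫ₗ σ.quotKerEquivRange.symm ≪≫ₗ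
      Submodule.quotEquivOfEq _ _ hθσ.linearMap_ker_eq ≪≫ₗ e
  obtain ⟨split⟩ := quotient_prod_linearEquiv (LinearMap.ker ρ)
  exact ⟨split.symm ≪≫ₗ ρ.quotKerEquivRange.prodCongr kerEquiv⟩

end LinearAlgebra

end CE

theorem dixmier_codim_one_iso_general
    {K L V : Type*} [Field K] [LieRing L] [LieAlgebra K L]
    [AddCommGroup V] [Module K V] [LieRingModule L V] [LieModule K L V]
    (I : LieSubalgebra K L) (hI : ∀ a b : L, b ∈ I → ⁅a, b⁆ ∈ I)
    (hcodim : Module.finrank K (L ⧸ I.toSubmodule) = 1) (x : L) (hx : x ∉ I)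
    (n : ℕ) [FiniteDimensional K (CE.Hq K I V n)] :
    Nonempty (CE.Hq K L V (n + 1) ≃ₗ[K] CE.HInv K L V I hI x (n + 1) × CE.HInv K L V I hI x n) := by
  obtain ⟨S⟩ := CE.nonempty_splitting hcodim hx
  rw [← S.range_resHq V n hI, ← CE.ker_actHq hI x]
  exact CE.nonempty_linearEquiv_range_prod_ker_of_exact (S.exact_actHq_coordWedgeHq V n hI)
    (S.exact_coordWedgeHq_resHq V n hI)

/-- **(Dixmier.)** Let `L` be a finite-dimensional Lie algebra over a field `K` of
characteristic zero, `V` a finite-dimensional `L`-module, and `I` an ideal of `L` of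
codimension 1.  Then for any `n ≥ 1` and any `x ∈ L` with `x ∉ I` there is an isomorphism
of vector spaces `Hⁿ(L,V) ≃ Hⁿ(I,V)ˣ × Hⁿ⁻¹(I,V)ˣ`. -/
theorem dixmier_codim_one_iso
    (K : Type*) (L : Type*) (V : Type*) [Field K] [CharZero K]
    [LieRing L] [LieAlgebra K L] [FiniteDimensional K L]
    [AddCommGroup V] [Module K V] [LieRingModule L V] [LieModule K L V]
    [FiniteDimensional K V]
    (I : LieSubalgebra K L) (hI : ∀ a b : L, b ∈ I → ⁅a, b⁆ ∈ I)
    (hcodim : Module.finrank K (L ⧸ I.toSubmodule) = 1)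
    (x : L) (hx : x ∉ I) (n : ℕ) (hn : 1 ≤ n) :
    Nonempty ((CE.Hq K L V n) ≃ₗ[K]
      (↥(CE.HInv K L V I hI x n) × ↥(CE.HInv K L V I hI x (n - 1)))) := by
  obtain ⟨m, rfl⟩ := Nat.exists_eq_add_of_le' hn
  exact dixmier_codim_one_iso_general I hI hcodim x hx m
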